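/- Let ℓ, c ∈ ℕ and n = ℓ·c + 1. Let G be the directed graph with nodes v_{−n},…,v_n and edge relation E = {(v_i,v_j) : i > j}, let H = gad(G), and let H' be the undirected labelled graph obtained from H by deleting the edges {v¹_{v_1}, v²_e} and {v³_e, v¹_{v_{−1}}} and adding the edges {v¹_{v_{−1}}, v²_e} and {v³_e, v¹_{v_1}}, where e = (v_1, v_{−1}). Then H is isomorphic to the gadgetisation of a strict linear order, H' is not isomorphic to the gadgetisation of any strict linear order, and for every node u of H, W^ℓ_c(u) computed in H equals W^ℓ_c of the corresponding node of H' computed in H'. -/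

import Mathlib

/-- A strict linear order on a type `V`: an irreflexive, transitive and total
binary relation. -/
def IsStrictLinearOrderRel {V : Type} (E : V → V → Prop) : Prop :=
  (∀ v, ¬ E v v) ∧ (∀ u v w, E u v → E v w → E u w) ∧ (∀ u v : V, u ≠ v → E u v ∨ E v u)

/-- Vertices of the gadgetisation of a directed graph `(V, E)`: a node `v¹_u` for every
`u : V` (left summand) and, for every edge `e` of `E`, a node `v²_e` (right summand with
second component `false`) and a node `v³_e` (second component `true`). -/
def GadV {V : Type} (E : V → V → Prop) : Type :=
  V ⊕ ({p : V × V // E p.1 p.2} × Bool)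

/-- The (symmetric) adjacency relation of the gadgetisation: every edge `(u,w)` of the
original graph is replaced by the undirected path `v¹_u — v²_{(u,w)} — v³_{(u,w)} — v¹_w`. -/
def gadAdj {V : Type} (E : V → V → Prop) : GadV E → GadV E → Prop
  | Sum.inl u, Sum.inr (e, b) => (b = false ∧ e.val.1 = u) ∨ (b = true ∧ e.val.2 = u)
  | Sum.inr (e, b), Sum.inl u => (b = false ∧ e.val.1 = u) ∨ (b = true ∧ e.val.2 = u)
  | Sum.inr (e, b), Sum.inr (e', b') => e = e' ∧ b ≠ b'
  | Sum.inl _, Sum.inl _ => False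

/-- The labelling of the gadgetisation: `v¹`-nodes get label `(1,0,0)`, `v²`-nodes get
`(0,1,0)` and `v³`-nodes get `(0,0,1)`. -/
def gadLab {V : Type} (E : V → V → Prop) : GadV E → Fin 3 → Bool
  | Sum.inl _ => fun i => decide (i = 0)
  | Sum.inr (_, false) => fun i => decide (i = 1)
  | Sum.inr (_, true) => fun i => decide (i = 2)

noncomputable instance GadV.fintype {V : Type} [Fintype V] (E : V → V → Prop) :
    Fintype (GadV E) := by
  classical
  unfold GadV
  infer_instance

/-- An isomorphism of labelled graphs: an edge-preserving and label-preserving bijection. -/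
def IsoLabGraph {V₁ V₂ : Type} {d : ℕ} (E₁ : V₁ → V₁ → Prop) (lab₁ : V₁ → Fin d → Bool)
    (E₂ : V₂ → V₂ → Prop) (lab₂ : V₂ → Fin d → Bool) : Prop :=
  ∃ f : V₁ ≃ V₂, (∀ u v, E₁ u v ↔ E₂ (f u) (f v)) ∧ ∀ v, lab₁ v = lab₂ (f v)

/-- `(W, EH, labH)` is isomorphic to the gadgetisation of some (finite) strict linear
order. -/
def IsGadLin {W : Type} (EH : W → W → Prop) (labH : W → Fin 3 → Bool) : Prop :=
  ∃ (U : Type) (_ : Fintype U) (R : U → U → Prop),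
    IsStrictLinearOrderRel R ∧ IsoLabGraph EH labH (gadAdj R) (gadLab R)

/-- A gadgetised path from `u` to `z` via `w` (a `P₂` node) and `v` (a `P₃` node). -/
def GadPath {V : Type} (E : V → V → Prop) (lab : V → Fin 3 → Bool) (u w v z : V) : Prop :=
  lab u 0 = true ∧ lab w 1 = true ∧ lab v 2 = true ∧ lab z 0 = true ∧
    E u w ∧ E w v ∧ E v z

/-- There is a gadgetised edge from `u` to `z`. -/
def GadEdge {V : Type} (E : V → V → Prop) (lab : V → Fin 3 → Bool) (u z : V) : Prop :=
  ∃ w v, GadPath E lab u w v z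

/-- Condition φ₁: every node satisfies exactly one of `P₁, P₂, P₃`. -/
def phi1 {V : Type} (lab : V → Fin 3 → Bool) : Prop :=
  ∀ v : V,
    (lab v 0 = true ∧ lab v 1 = false ∧ lab v 2 = false) ∨
    (lab v 0 = false ∧ lab v 1 = true ∧ lab v 2 = false) ∨
    (lab v 0 = false ∧ lab v 1 = false ∧ lab v 2 = true)

/-- Condition φ₂: every `P₂`-node has exactly two neighbours, exactly one of them a
`P₁`-node and exactly one a `P₃`-node; every `P₃`-node has exactly two neighbours, exactly
one a `P₁`-node and exactly one a `P₂`-node; and no two `P₁`-nodes are adjacent. -/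
def phi2 {V : Type} [Fintype V] (E : V → V → Prop) (lab : V → Fin 3 → Bool) : Prop :=
  (∀ v : V, lab v 1 = true →
    Nat.card {w | E v w} = 2 ∧ Nat.card {w | E v w ∧ lab w 0 = true} = 1 ∧
      Nat.card {w | E v w ∧ lab w 2 = true} = 1) ∧
  (∀ v : V, lab v 2 = true →
    Nat.card {w | E v w} = 2 ∧ Nat.card {w | E v w ∧ lab w 0 = true} = 1 ∧
      Nat.card {w | E v w ∧ lab w 1 = true} = 1) ∧
  (∀ u v : V, lab u 0 = true → lab v 0 = true → ¬ E u v)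

/-- Condition φ₃: between any two distinct `P₁`-nodes there is exactly one gadgetised edge
in total (from `u` to `z` or from `z` to `u`). -/
def phi3 {V : Type} [Fintype V] (E : V → V → Prop) (lab : V → Fin 3 → Bool) : Prop :=
  ∀ u z : V, lab u 0 = true → lab z 0 = true → u ≠ z →
    Nat.card {p : V × V | GadPath E lab u p.1 p.2 z} +
      Nat.card {p : V × V | GadPath E lab z p.1 p.2 u} = 1

/-- Condition φ₄: there is no triangle of gadgetised edges. -/
def phi4 {V : Type} (E : V → V → Prop) (lab : V → Fin 3 → Bool) : Prop :=
  ¬ ∃ u v w : V, GadEdge E lab u v ∧ GadEdge E lab v w ∧ GadEdge E lab w u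

/-- `N₂ u`: the number of neighbours of `u` satisfying `P₂`. -/
noncomputable def N2 {V : Type} [Fintype V] (E : V → V → Prop) (lab : V → Fin 3 → Bool)
    (u : V) : ℕ :=
  Nat.card {w | E u w ∧ lab w 1 = true}

/-- Condition ψ: for all `0 ≤ i < j < |P₁|` there are `P₁`-nodes `u, w` with `N₂ u = j`,
`N₂ w = i` and a gadgetised edge from `u` to `w`. -/
def psiCond {V : Type} [Fintype V] (E : V → V → Prop) (lab : V → Fin 3 → Bool) : Prop :=
  ∀ i j : ℕ, i < j → j < Nat.card {v : V | lab v 0 = true} →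
    ∃ u w : V, lab u 0 = true ∧ lab w 0 = true ∧
      N2 E lab u = j ∧ N2 E lab w = i ∧ GadEdge E lab u w

/-- The multiset `⟦f w : w ∈ V, p w⟧` of values of `f` on the elements satisfying `p`. -/
noncomputable def msetOf {V α : Type} [Fintype V] (p : V → Prop) (f : V → α) : Multiset α :=
  letI := Classical.decPred p
  ((Finset.univ.filter p).val.map f)

/-- Truncate every multiplicity in a multiset to at most `c` (the `c`-bounded multiset). -/
noncomputable def trunc {α : Type} (c : ℕ) (M : Multiset α) : Multiset α :=
  letI := Classical.decEq α
  M.toFinset.val.bind fun a => Multiset.replicate (min c (M.count a)) a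

/-- The type of colours of the (bounded) Weisfeiler–Leman algorithm after `ℓ` rounds, for
graphs of dimension `d`: a colour of round `ℓ+1` is a tuple of a colour of round `ℓ`
and four multisets of colours of round `ℓ`. -/
def WLC (d : ℕ) : ℕ → Type
  | 0 => Fin d → Bool
  | (ℓ+1) => WLC d ℓ × Multiset (WLC d ℓ) × Multiset (WLC d ℓ) × Multiset (WLC d ℓ) ×
      Multiset (WLC d ℓ)

/-- The `c`-bounded Weisfeiler–Leman colouring `W^ℓ_c` on the directed labelled graph
`(V, E, lab)`:  `W^0_c(v) = lab v` and `W^{ℓ+1}_c(v)` is the tuple of `W^ℓ_c(v)` and the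
`c`-bounded multisets of the previous colours over `←N(v)∩→N(v)`, `←N(v)∖→N(v)`,
`→N(v)∖←N(v)` and `V∖(N(v)∪{v})`. -/
noncomputable def WL {d : ℕ} {V : Type} [Fintype V] (E : V → V → Prop)
    (lab : V → Fin d → Bool) (c : ℕ) : (ℓ : ℕ) → V → WLC d ℓ
  | 0, v => lab v
  | (ℓ+1), v =>
      (WL E lab c ℓ v,
       trunc c (msetOf (fun w => E w v ∧ E v w) (WL E lab c ℓ)),
       trunc c (msetOf (fun w => E w v ∧ ¬ E v w) (WL E lab c ℓ)),
       trunc c (msetOf (fun w => E v w ∧ ¬ E w v) (WL E lab c ℓ)),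
       trunc c (msetOf (fun w => ¬ (E w v ∨ E v w) ∧ w ≠ v) (WL E lab c ℓ)))

/-- The vertex set `{v_{-n}, …, v_n}`, identified with the integer interval `[-n, n]`. -/
abbrev IntNode (n : ℕ) : Type := {i : ℤ // i ∈ Finset.Icc (-(n : ℤ)) (n : ℤ)}


section Aux

noncomputable def cnt {V : Type} [Fintype V] (p : V → Prop) : ℕ :=
  letI := Classical.decPred p
  (Finset.univ.filter p).card

theorem trunc_congr {α : Type} (c : ℕ) (M N : Multiset α)
    (h : ∀ a, (letI := Classical.decEq α; min c (M.count a) = min c (N.count a))) :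
    trunc c M = trunc c N := by
  classical
  have key : ∀ (M : Multiset α) (a : α), (trunc c M).count a = min c (M.count a) := by
    intro M a
    have : trunc c M = M.toFinset.val.bind fun a => Multiset.replicate (min c (M.count a)) a := by
      unfold trunc
      congr!
    rw [this, Multiset.count_bind]
    simp only [Multiset.count_replicate]
    change ∑ b ∈ M.toFinset, (if b = a then min c (M.count b) else 0) = _
    rw [Finset.sum_ite_eq']
    split_ifs with h1
    · rfl
    · simp only [Multiset.mem_toFinset] at h1
      simp [Multiset.count_eq_zero_of_notMem h1]
  ext a
  rw [key, key]
  have := h a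
  convert this

theorem count_msetOf {V α : Type} [Fintype V] (p : V → Prop) (f : V → α) (a : α) :
    (letI := Classical.decEq α; (msetOf p f).count a) = cnt (fun w => p w ∧ f w = a) := by
  classical
  unfold msetOf cnt
  rw [Multiset.count_map]
  rw [← Finset.filter_val, Finset.card_val, Finset.filter_filter]
  congr 1
  ext w
  simp [eq_comm]

theorem min_sum_congr {ι : Type} (c : ℕ) (s : Finset ι) (f g : ι → ℕ)
    (h : ∀ i ∈ s, min c (f i) = min c (g i)) : min c (∑ i ∈ s, f i) = min c (∑ i ∈ s, g i) := by
  classical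
  induction s using Finset.induction_on with
  | empty => simp
  | insert a s ha ih =>
    rw [Finset.sum_insert ha, Finset.sum_insert ha]
    have h1 := h a (Finset.mem_insert_self _ _)
    have h2 := ih (fun i hi => h i (Finset.mem_insert_of_mem hi))
    omega

theorem cnt_congr {V : Type} [Fintype V] {p q : V → Prop} (h : ∀ w, p w ↔ q w) :
    cnt p = cnt q := by
  have : p = q := by ext w; exact h w
  rw [this]

theorem step_trunc {V α T : Type} [Fintype V] (c : ℕ) (τ : V → T) (p q : V → Prop) (f : V → α)
    (hf : ∀ x y, τ x = τ y → f x = f y)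
    (h : ∀ t, min c (cnt (fun w => p w ∧ τ w = t)) = min c (cnt (fun w => q w ∧ τ w = t))) :
    trunc c (msetOf p f) = trunc c (msetOf q f) := by
  classical
  apply trunc_congr
  intro a
  rw [count_msetOf, count_msetOf]
  have key : ∀ p : V → Prop, cnt (fun w => p w ∧ f w = a) =
      ∑ t ∈ Finset.univ.image τ,
        if (∃ x, τ x = t ∧ f x = a) then cnt (fun w => p w ∧ τ w = t) else 0 := by
    intro p
    have h1 : cnt (fun w => p w ∧ f w = a) =
      (Finset.univ.filter (fun w => p w ∧ f w = a)).card := by unfold cnt; congr!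
    rw [h1, Finset.card_eq_sum_card_fiberwise (f := τ) (t := Finset.univ.image τ)
      (by intro x _; simp)]
    apply Finset.sum_congr rfl
    intro t _
    rw [Finset.filter_filter]
    split_ifs with hx
    · obtain ⟨x, rfl, rfl⟩ := hx
      unfold cnt
      congr 1
      ext w
      simp only [Finset.mem_filter, Finset.mem_univ, true_and]
      constructor
      · rintro ⟨⟨h1, h2⟩, h3⟩; exact ⟨h1, h3⟩
      · rintro ⟨h1, h2⟩; exact ⟨⟨h1, hf _ _ h2⟩, h2⟩
    · rw [Finset.card_eq_zero, Finset.filter_eq_empty_iff]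
      rintro w _ ⟨⟨h1, h2⟩, h3⟩
      exact hx ⟨w, h3, h2⟩
  rw [key, key]
  apply min_sum_congr
  intro t _
  split_ifs
  · exact h t
  · rfl

theorem cnt_total {V T : Type} [Fintype V] (τ : V → T) (A : V → V → Prop) (hA : ∀ v, ¬ A v v)
    (v : V) (t : T) [Decidable (τ v = t)] :
    cnt (fun w => (¬ A v w ∧ w ≠ v) ∧ τ w = t) + cnt (fun w => A v w ∧ τ w = t)
      + (if τ v = t then 1 else 0) = cnt (fun w => τ w = t) := by
  classical
  have e : ∀ p : V → Prop, cnt p = ∑ w, if p w then 1 else 0 := by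
    intro p
    unfold cnt
    rw [Finset.card_filter]
  have e3 : (if τ v = t then 1 else 0) = ∑ w, if (w = v ∧ τ w = t) then 1 else 0 := by
    rw [Finset.sum_eq_single v]
    · simp
    · intro b _ hb; simp [hb]
    · intro hh; exact absurd (Finset.mem_univ _) hh
  rw [e, e, e, e3, ← Finset.sum_add_distrib, ← Finset.sum_add_distrib]
  apply Finset.sum_congr rfl
  intro w _
  by_cases h1 : w = v
  · subst h1; simp [hA]
  · by_cases h2 : A v w <;> simp [h1, h2]

theorem le_cnt {V : Type} [Fintype V] (c : ℕ) (p : V → Prop) (g : Fin c → V)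
    (hg : Function.Injective g) (hp : ∀ i, p (g i)) : c ≤ cnt p := by
  classical
  unfold cnt
  have := Finset.card_le_card_of_injOn (s := (Finset.univ : Finset (Fin c)))
    (t := Finset.univ.filter p) g (by intro i _; simp [hp]) hg.injOn
  simpa using this

theorem cnt_le_of_sub {V : Type} [Fintype V] (p q : V → Prop)
    (hp : ∀ x y, p x → p y → x = y) (h : (∃ x, p x) → ∃ x, q x) : cnt p ≤ cnt q := by
  classical
  by_cases hx : ∃ x, p x
  · obtain ⟨y, hy⟩ := h hx
    have h1 : cnt p ≤ 1 := by
      unfold cnt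
      rw [Finset.card_le_one]
      intro a ha b hb
      simp at ha hb
      exact hp _ _ ha hb
    have h2 := le_cnt 1 q (fun _ => y) (by intro a b _; exact Subsingleton.elim _ _) (fun _ => hy)
    omega
  · have : cnt p = 0 := by
      unfold cnt
      rw [Finset.card_eq_zero, Finset.filter_eq_empty_iff]
      intro x _ h; exact hx ⟨x, h⟩
    omega

/-- One WL step for two symmetric graphs on the same node set. -/
theorem WL_step {d : ℕ} {V T : Type} [Fintype V] (A A' : V → V → Prop)
    (hs : ∀ a b, A a b ↔ A b a) (hs' : ∀ a b, A' a b ↔ A' b a)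
    (lab : V → Fin d → Bool) (c k : ℕ) (τ : V → T)
    (ih : ∀ x y, τ x = τ y → WL A lab c k x = WL A' lab c k y) (x y : V) (hxy : τ x = τ y)
    (h1 : ∀ t, min c (cnt (fun w => A x w ∧ τ w = t)) = min c (cnt (fun w => A' y w ∧ τ w = t)))
    (h2 : ∀ t, min c (cnt (fun w => (¬ A x w ∧ w ≠ x) ∧ τ w = t)) =
      min c (cnt (fun w => (¬ A' y w ∧ w ≠ y) ∧ τ w = t))) :
    WL A lab c (k+1) x = WL A' lab c (k+1) y := by
  have hfg : WL A' lab c k = WL A lab c k := by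
    funext x; exact (ih x x rfl).symm
  have hf : ∀ x y, τ x = τ y → WL A lab c k x = WL A lab c k y := by
    intro x y h; rw [ih x y h, hfg]
  simp only [WL]
  rw [hfg]
  refine Prod.ext (hf _ _ hxy) (Prod.ext ?_ (Prod.ext ?_ (Prod.ext ?_ ?_)))
  · have e1 : (fun w => A w x ∧ A x w) = (fun w => A x w) := by funext w; simp [hs w x]
    have e2 : (fun w => A' w y ∧ A' y w) = (fun w => A' y w) := by funext w; simp [hs' w y]
    rw [e1, e2]
    exact step_trunc c τ _ _ _ hf h1
  · have e1 : (fun w => A w x ∧ ¬ A x w) = (fun w => False) := by funext w; simp [hs w x]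
    have e2 : (fun w => A' w y ∧ ¬ A' y w) = (fun w => False) := by funext w; simp [hs' w y]
    rw [e1, e2]
  · have e1 : (fun w => A x w ∧ ¬ A w x) = (fun w => False) := by funext w; simp [hs w x]
    have e2 : (fun w => A' y w ∧ ¬ A' w y) = (fun w => False) := by funext w; simp [hs' w y]
    rw [e1, e2]
  · have e1 : (fun w => ¬ (A w x ∨ A x w) ∧ w ≠ x) = (fun w => ¬ A x w ∧ w ≠ x) := by
      funext w; simp [hs w x]
    have e2 : (fun w => ¬ (A' w y ∨ A' y w) ∧ w ≠ y) = (fun w => ¬ A' y w ∧ w ≠ y) := by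
      funext w; simp [hs' w y]
    rw [e1, e2]
    exact step_trunc c τ _ _ _ hf h2

def cl (m : ℕ) (i : ℤ) : ℤ := if |i| ≤ (m : ℤ) then 0 else i

theorem cl_mono {m m' : ℕ} (h : m ≤ m') {i j : ℤ} (hij : cl m i = cl m j) :
    cl m' i = cl m' j := by
  unfold cl at *
  grind

theorem cl_mid {m : ℕ} {i : ℤ} (h1 : -(m:ℤ) ≤ i) (h2 : i ≤ m) : cl m i = 0 := by
  unfold cl
  rw [if_pos (abs_le.2 ⟨h1, h2⟩)]

theorem cl_zero {m : ℕ} {i : ℤ} (h : cl m i = 0) : -(m:ℤ) ≤ i ∧ i ≤ m := by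
  unfold cl at h
  split_ifs at h with h1
  · exact abs_le.1 h1
  · subst h; simp at h1

theorem cl_ne {m : ℕ} {i : ℤ} (h : cl m i ≠ 0) : cl m i = i := by
  unfold cl at *
  grind

abbrev SV {V : Type} (E : V → V → Prop) : Type := V ⊕ ({p : V × V // E p.1 p.2} × Bool)

def sAdj {V : Type} (E : V → V → Prop) : SV E → SV E → Prop := gadAdj E

def sLab {V : Type} (E : V → V → Prop) : SV E → Fin 3 → Bool := gadLab E

theorem sAdj_lr {V : Type} (E : V → V → Prop) (u : V) (e : {p : V × V // E p.1 p.2}) (b : Bool) :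
    sAdj E (Sum.inl u) (Sum.inr (e, b)) ↔
      (b = false ∧ e.val.1 = u) ∨ (b = true ∧ e.val.2 = u) := Iff.rfl

theorem sAdj_rl {V : Type} (E : V → V → Prop) (u : V) (e : {p : V × V // E p.1 p.2}) (b : Bool) :
    sAdj E (Sum.inr (e, b)) (Sum.inl u) ↔
      (b = false ∧ e.val.1 = u) ∨ (b = true ∧ e.val.2 = u) := Iff.rfl

theorem sAdj_rr {V : Type} (E : V → V → Prop) (e e' : {p : V × V // E p.1 p.2}) (b b' : Bool) :
    sAdj E (Sum.inr (e, b)) (Sum.inr (e', b')) ↔ e = e' ∧ b ≠ b' := Iff.rfl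

theorem sAdj_ll {V : Type} (E : V → V → Prop) (u v : V) :
    sAdj E (Sum.inl u) (Sum.inl v) ↔ False := Iff.rfl

theorem sLab_l {V : Type} (E : V → V → Prop) (u : V) (i : Fin 3) :
    sLab E (Sum.inl u) i = decide (i = 0) := rfl

theorem sLab_f {V : Type} (E : V → V → Prop) (e : {p : V × V // E p.1 p.2}) (i : Fin 3) :
    sLab E (Sum.inr (e, false)) i = decide (i = 1) := rfl

theorem sLab_t {V : Type} (E : V → V → Prop) (e : {p : V × V // E p.1 p.2}) (i : Fin 3) :
    sLab E (Sum.inr (e, true)) i = decide (i = 2) := rfl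

def tau {n : ℕ} (E : IntNode n → IntNode n → Prop) (m : ℕ) : SV E → ℤ × ℤ × ℤ
  | Sum.inl i => (cl m i.1, 0, 0)
  | Sum.inr (e, b) => (cl m e.val.1.1, cl m e.val.2.1, if b then 2 else 1)

theorem tau_mono {n : ℕ} (E : IntNode n → IntNode n → Prop) {m m' : ℕ} (h : m ≤ m')
    {x y : SV E} (hxy : tau E m x = tau E m y) : tau E m' x = tau E m' y := by
  rcases x with i | ⟨e, b⟩ <;> rcases y with j | ⟨e', b'⟩ <;>
    simp only [tau, Prod.mk.injEq] at hxy ⊢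
  · exact ⟨cl_mono h hxy.1, trivial⟩
  · grind
  · grind
  · exact ⟨cl_mono h hxy.1, cl_mono h hxy.2.1, hxy.2.2⟩

theorem gadAdj_symm {V : Type} (E : V → V → Prop) (a b : GadV E) :
    gadAdj E a b ↔ gadAdj E b a := by
  rcases a with i | ⟨e, s⟩ <;> rcases b with j | ⟨e', s'⟩ <;> simp only [gadAdj]
  grind

theorem gadAdj_irrefl {V : Type} (E : V → V → Prop) (a : GadV E) : ¬ gadAdj E a a := by
  rcases a with i | ⟨e, b⟩ <;> simp [gadAdj]

theorem gadEdge_R {V : Type} (R : V → V → Prop) (x y : GadV R)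
    (h : GadEdge (gadAdj R) (gadLab R) x y) : ∃ a b, x = Sum.inl a ∧ y = Sum.inl b ∧ R a b := by
  obtain ⟨w, v, h1, h2, h3, h4, h5, h6, h7⟩ := h
  rcases x with a | ⟨e, _ | _⟩
  · rcases y with b | ⟨e, _ | _⟩
    · refine ⟨a, b, rfl, rfl, ?_⟩
      rcases w with i | ⟨e, _ | _⟩
      · simp [gadLab] at h2
      · rcases v with i | ⟨e', _ | _⟩
        · simp [gadLab] at h3
        · simp [gadLab] at h3
        · simp [gadAdj] at h5 h6 h7
          subst h6
          rw [← h5, ← h7]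
          exact e.2
      · simp [gadLab] at h2
    · simp [gadLab] at h4
    · simp [gadLab] at h4
  · simp [gadLab] at h1
  · simp [gadLab] at h1

theorem gadEdge_iso {V W : Type} {E₁ : V → V → Prop} {E₂ : W → W → Prop}
    {l₁ : V → Fin 3 → Bool} {l₂ : W → Fin 3 → Bool} (f : V ≃ W)
    (h1 : ∀ u v, E₁ u v ↔ E₂ (f u) (f v)) (h2 : ∀ v, l₁ v = l₂ (f v)) {x y : V}
    (h : GadEdge E₁ l₁ x y) : GadEdge E₂ l₂ (f x) (f y) := by
  obtain ⟨w, v, h⟩ := h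
  refine ⟨f w, f v, ?_⟩
  unfold GadPath at *
  simp only [← h1, ← h2]
  exact h

theorem cnt_pair {V T : Type} [Fintype V] [DecidableEq T] (τ : V → T) (a b : V) (hab : a ≠ b)
    (t : T) : cnt (fun w => (w = a ∨ w = b) ∧ τ w = t) =
      (if τ a = t then 1 else 0) + (if τ b = t then 1 else 0) := by
  classical
  have e : ∀ p : V → Prop, cnt p = ∑ w, if p w then 1 else 0 := by
    intro p
    unfold cnt
    rw [Finset.card_filter]
  have e3 : ∀ v, (if τ v = t then 1 else 0) = ∑ w, if (w = v ∧ τ w = t) then 1 else 0 := by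
    intro v
    rw [Finset.sum_eq_single v]
    · simp
    · intro b _ hb; simp [hb]
    · intro hh; exact absurd (Finset.mem_univ _) hh
  rw [e, e3, e3, ← Finset.sum_add_distrib]
  apply Finset.sum_congr rfl
  intro w _
  by_cases h1 : w = a
  · subst h1; simp [hab]
  · by_cases h2 : w = b
    · subst h2; simp [h1]
    · simp [h1, h2]

theorem compl_eq {V T : Type} [Fintype V] (τ : V → T) (A A' : V → V → Prop)
    (hA : ∀ v, ¬ A v v) (hA' : ∀ v, ¬ A' v v) (x y : V) (hxy : τ x = τ y) (t : T)
    (h : cnt (fun w => A x w ∧ τ w = t) = cnt (fun w => A' y w ∧ τ w = t)) :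
    cnt (fun w => (¬ A x w ∧ w ≠ x) ∧ τ w = t) = cnt (fun w => (¬ A' y w ∧ w ≠ y) ∧ τ w = t) := by
  classical
  have h1 := cnt_total τ A hA x t
  have h2 := cnt_total τ A' hA' y t
  rw [hxy] at h1
  omega

theorem sAdj_symm {V : Type} (E : V → V → Prop) (a b : SV E) :
    sAdj E a b ↔ sAdj E b a := gadAdj_symm E a b

theorem sAdj_irrefl {V : Type} (E : V → V → Prop) (a : SV E) : ¬ sAdj E a a := gadAdj_irrefl E a

theorem sAdj_false {V : Type} (E : V → V → Prop) (e : {p : V × V // E p.1 p.2}) (w : SV E) :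
    sAdj E (Sum.inr (e, false)) w ↔ w = Sum.inl e.val.1 ∨ w = Sum.inr (e, true) := by
  rcases w with k | ⟨f, b⟩
  · simp [sAdj_rl, eq_comm]
  · cases b <;> simp [sAdj_rr, eq_comm]

theorem sAdj_true {V : Type} (E : V → V → Prop) (e : {p : V × V // E p.1 p.2}) (w : SV E) :
    sAdj E (Sum.inr (e, true)) w ↔ w = Sum.inl e.val.2 ∨ w = Sum.inr (e, false) := by
  rcases w with k | ⟨f, b⟩
  · simp [sAdj_rl, eq_comm]
  · cases b <;> simp [sAdj_rr, eq_comm]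

set_option maxHeartbeats 1000000 in
theorem key_step (c n : ℕ)
    (E : IntNode n → IntNode n → Prop) [inst : Fintype (SV E)]
    (hE : ∀ i j : IntNode n, E i j ↔ i.val > j.val)
    (v1 vm1 : IntNode n) (hv1 : v1.val = 1) (hvm1 : vm1.val = -1)
    (e0 : {p : IntNode n × IntNode n // E p.1 p.2}) (he0 : e0.val = (v1, vm1))
    (A' : SV E → SV E → Prop) (hirr : ∀ v, ¬ A' v v)
    (hI : ∀ j w, (∀ b, w ≠ Sum.inr (e0, b)) → (A' (Sum.inl j) w ↔ sAdj E (Sum.inl j) w))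
    (hI2 : ∀ j w, j ≠ v1 → j ≠ vm1 → (A' (Sum.inl j) w ↔ sAdj E (Sum.inl j) w))
    (hF : ∀ e, ∃ i : IntNode n, (i = e.val.1 ∨ (e = e0 ∧ i = vm1)) ∧
      ∀ w, A' (Sum.inr (e, false)) w ↔ w = Sum.inl i ∨ w = Sum.inr (e, true))
    (hT : ∀ e, ∃ i : IntNode n, (i = e.val.2 ∨ (e = e0 ∧ i = v1)) ∧
      ∀ w, A' (Sum.inr (e, true)) w ↔ w = Sum.inl i ∨ w = Sum.inr (e, false))
    (m : ℕ) (hm : 1 ≤ m) (hmc : m + c ≤ n) (x y : SV E) (hxy : tau E m x = tau E m y) (t) :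
    min c (cnt (fun w => sAdj E x w ∧ tau E (m+c) w = t)) =
      min c (cnt (fun w => A' y w ∧ tau E (m+c) w = t)) ∧
    min c (cnt (fun w => (¬ sAdj E x w ∧ w ≠ x) ∧ tau E (m+c) w = t)) =
      min c (cnt (fun w => (¬ A' y w ∧ w ≠ y) ∧ tau E (m+c) w = t)) := by
  classical
  have hxy' := tau_mono E (Nat.le_add_right m c) hxy
  have red : cnt (fun w => sAdj E x w ∧ tau E (m+c) w = t) =
      cnt (fun w => A' y w ∧ tau E (m+c) w = t) →
      min c (cnt (fun w => sAdj E x w ∧ tau E (m+c) w = t)) =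
      min c (cnt (fun w => A' y w ∧ tau E (m+c) w = t)) ∧
    min c (cnt (fun w => (¬ sAdj E x w ∧ w ≠ x) ∧ tau E (m+c) w = t)) =
      min c (cnt (fun w => (¬ A' y w ∧ w ≠ y) ∧ tau E (m+c) w = t)) := by
    intro h
    have := compl_eq (tau E (m+c)) (sAdj E) A' (sAdj_irrefl E) hirr x y hxy' t h
    exact ⟨by rw [h], by rw [this]⟩
  have c1 : cl (m+c) v1.val = 0 := cl_mid (by omega) (by push_cast; omega)
  have cm1 : cl (m+c) vm1.val = 0 := cl_mid (by push_cast; omega) (by omega)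
  have hj := hxy'
  rcases x with i | ⟨e, b⟩ <;> rcases y with j | ⟨e', b'⟩
  · -- both are P1 nodes
    by_cases hmid : cl m i.val = 0
    · have hmidj : cl m j.val = 0 := by
        simp only [tau, Prod.mk.injEq] at hxy; rw [← hxy.1]; exact hmid
      obtain ⟨hi1, hi2⟩ := cl_zero hmid
      obtain ⟨hj1, hj2⟩ := cl_zero hmidj
      by_cases ht : t = (0, 0, 1) ∨ t = (0, 0, 2)
      · -- lower bounds
        have node : ∀ z : ℤ, -(n:ℤ) ≤ z → z ≤ n → ∃ k : IntNode n, k.val = z := by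
          intro z h1 h2
          exact ⟨⟨z, Finset.mem_Icc.2 ⟨h1, h2⟩⟩, rfl⟩
        have lo : ∀ k : Fin c, ∃ z : IntNode n, z.val = -(m:ℤ) - 1 - k := by
          intro k; apply node <;> omega
        have hi : ∀ k : Fin c, ∃ z : IntNode n, z.val = (m:ℤ) + 1 + k := by
          intro k; apply node <;> omega
        choose lo hlo using lo
        choose hi hhi using hi
        have loi : Function.Injective lo := by
          intro a b hab
          have h1 := hlo a
          have h2 := hlo b
          rw [hab] at h1
          ext; omega
        have hii : Function.Injective hi := by
          intro a b hab
          have h1 := hhi a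
          have h2 := hhi b
          rw [hab] at h1
          ext; omega
        have cll : ∀ k, cl (m+c) (lo k).val = 0 := by
          intro k; rw [hlo]; apply cl_mid <;> push_cast <;> omega
        have clh : ∀ k, cl (m+c) (hi k).val = 0 := by
          intro k; rw [hhi]; apply cl_mid <;> push_cast <;> omega
        have ne0 : ∀ e : {p : IntNode n × IntNode n // E p.1 p.2}, (e.val.1 ≠ v1 ∨ e.val.2 ≠ vm1) →
            ∀ b b', (Sum.inr (e, b) : SV E) ≠ Sum.inr (e0, b') := by
          intro e h b b' heq
          have : e = e0 := by
            have := Sum.inr.inj heq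
            exact (Prod.mk.inj this).1
          subst this
          rw [he0] at h
          simp at h
        have LB : ∀ (B : SV E → SV E → Prop) (p : IntNode n), cl m p.val = 0 →
            (∀ w, (∀ b, w ≠ Sum.inr (e0, b)) → (B (Sum.inl p) w ↔ sAdj E (Sum.inl p) w)) →
            c ≤ cnt (fun w => B (Sum.inl p) w ∧ tau E (m+c) w = t) ∧
            c ≤ cnt (fun w => (¬ B (Sum.inl p) w ∧ w ≠ Sum.inl p) ∧ tau E (m+c) w = t) := by
          intro B p hp hB
          obtain ⟨hp1, hp2⟩ := cl_zero hp
          have hp' : cl (m+c) p.val = 0 := cl_mid (by push_cast; omega) (by push_cast; omega)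
          rcases ht with rfl | rfl
          · constructor
            · apply le_cnt c _ (fun k => Sum.inr (⟨(p, lo k), by rw [hE]; have := hlo k; dsimp only; omega⟩, false))
              · intro a b hab
                have h1 := (Prod.mk.inj (Sum.inr.inj hab)).1
                simp only [Subtype.mk.injEq, Prod.mk.injEq, true_and] at h1
                exact loi h1
              · intro k
                rw [hB]
                · simp [sAdj_lr, sAdj_rl, sAdj_rr, sAdj_ll, tau, cll, hp']
                · apply ne0; right; intro h; have := hlo k; simp only at h; rw [h] at this; omega
            · apply le_cnt c _ (fun k => Sum.inr (⟨(hi ⟨0, by have := k.2; omega⟩, lo k), by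
                rw [hE]; have := hlo k; have := hhi ⟨0, by have := k.2; omega⟩; dsimp only at *; omega⟩, false))
              · intro a b hab
                have h1 := (Prod.mk.inj (Sum.inr.inj hab)).1
                simp only [Subtype.mk.injEq, Prod.mk.injEq, true_and] at h1
                exact loi h1
              · intro k
                have h0 := hhi ⟨0, by have := k.2; omega⟩
                rw [hB]
                · simp [sAdj_lr, sAdj_rl, sAdj_rr, sAdj_ll, tau, cll, clh]
                  intro h; rw [h] at h0; simp at h0; omega
                · apply ne0; right; intro h; have := hlo k; simp only at h; rw [h] at this; omega
          · constructor
            · apply le_cnt c _ (fun k => Sum.inr (⟨(hi k, p), by rw [hE]; have := hhi k; dsimp only; omega⟩, true))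
              · intro a b hab
                have h1 := (Prod.mk.inj (Sum.inr.inj hab)).1
                simp only [Subtype.mk.injEq, Prod.mk.injEq, and_true] at h1
                exact hii h1
              · intro k
                rw [hB]
                · simp [sAdj_lr, sAdj_rl, sAdj_rr, sAdj_ll, tau, clh, hp']
                · apply ne0; left; intro h; have := hhi k; simp only at h; rw [h] at this; omega
            · apply le_cnt c _ (fun k => Sum.inr (⟨(hi k, lo ⟨0, by have := k.2; omega⟩), by
                rw [hE]; have := hhi k; have := hlo ⟨0, by have := k.2; omega⟩; dsimp only at *; omega⟩, true))
              · intro a b hab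
                have h1 := (Prod.mk.inj (Sum.inr.inj hab)).1
                simp only [Subtype.mk.injEq, Prod.mk.injEq, and_true] at h1
                exact hii h1
              · intro k
                have h0 := hlo ⟨0, by have := k.2; omega⟩
                rw [hB]
                · simp [sAdj_lr, sAdj_rl, sAdj_rr, sAdj_ll, tau, cll, clh]
                  intro h; rw [h] at h0; simp at h0; omega
                · apply ne0; left; intro h; have := hhi k; simp only at h; rw [h] at this; omega
        obtain ⟨a1, a2⟩ := LB (sAdj E) i hmid (fun _ _ => Iff.rfl)
        obtain ⟨b1, b2⟩ := LB A' j hmidj (fun w hw => hI j w hw)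
        constructor <;> omega
      · push Not at ht
        apply red
        have e1 : cnt (fun w => A' (Sum.inl j) w ∧ tau E (m+c) w = t) =
            cnt (fun w => sAdj E (Sum.inl j) w ∧ tau E (m+c) w = t) := by
          apply cnt_congr
          intro w
          apply and_congr_left
          intro hw
          apply hI
          rintro b rfl
          simp only [tau, he0, c1, cm1] at hw
          cases b <;> simp_all
        rw [e1]
        have main : ∀ i j : IntNode n, cl m i.val = 0 → cl m j.val = 0 →
            cnt (fun w => sAdj E (Sum.inl i) w ∧ tau E (m+c) w = t) ≤
            cnt (fun w => sAdj E (Sum.inl j) w ∧ tau E (m+c) w = t) := by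
          intro i j hi hj
          obtain ⟨hi1, hi2⟩ := cl_zero hi
          obtain ⟨hj1, hj2⟩ := cl_zero hj
          have ci : cl (m+c) i.val = 0 := cl_mid (by push_cast; omega) (by push_cast; omega)
          have cj : cl (m+c) j.val = 0 := cl_mid (by push_cast; omega) (by push_cast; omega)
          have big : ∀ k : ℤ, cl (m+c) k ≠ 0 → k < -(m:ℤ) ∨ (m:ℤ) < k := by
            intro k hk
            by_contra hcon
            push Not at hcon
            exact hk (cl_mid (by push_cast; omega) (by push_cast; omega))
          apply cnt_le_of_sub
          · rintro (x | ⟨⟨⟨p, q⟩, hpq⟩, b⟩) (y | ⟨⟨⟨p', q'⟩, hpq'⟩, b'⟩) ⟨h1, h2⟩ ⟨h3, h4⟩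
            · exact h1.elim
            · exact h1.elim
            · exact h3.elim
            · have h5 := h2.trans h4.symm
              cases b <;> cases b' <;> simp [sAdj_lr, tau] at h1 h3 h5 h2 h4
              · subst h1 h3
                have : cl (m+c) q.val ≠ 0 := by
                  intro h; apply ht.1; rw [← h2, ci, h]
                have h6 : q = q' := by
                  apply Subtype.ext
                  rw [← cl_ne this, h5.2, cl_ne (h5.2 ▸ this)]
                subst h6; rfl
              · subst h1 h3
                have : cl (m+c) p.val ≠ 0 := by
                  intro h; apply ht.2; rw [← h2, ci, h]
                have h6 : p = p' := by
                  apply Subtype.ext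
                  rw [← cl_ne this, h5.1, cl_ne (h5.1 ▸ this)]
                subst h6; rfl
          · rintro ⟨(x | ⟨⟨⟨p, q⟩, hpq⟩, b⟩), h1, h2⟩
            · exact h1.elim
            · have hpq2 := (hE _ _).1 hpq
              dsimp only at hpq2
              cases b <;> simp [sAdj_lr, sAdj_rl, sAdj_rr, sAdj_ll, tau] at h1 h2
              · subst h1
                have hq : cl (m+c) q.val ≠ 0 := by
                  intro h; apply ht.1; rw [← h2, ci, h]
                have := big _ hq
                refine ⟨Sum.inr (⟨(j, q), by rw [hE]; dsimp only; omega⟩, false), ?_, ?_⟩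
                · simp [sAdj_lr, sAdj_rl, sAdj_rr, sAdj_ll]
                · simp [tau, ← h2, ci, cj]
              · subst h1
                have hq : cl (m+c) p.val ≠ 0 := by
                  intro h; apply ht.2; rw [← h2, ci, h]
                have := big _ hq
                refine ⟨Sum.inr (⟨(p, j), by rw [hE]; dsimp only; omega⟩, true), ?_, ?_⟩
                · simp [sAdj_lr, sAdj_rl, sAdj_rr, sAdj_ll]
                · simp [tau, ← h2, ci, cj]
        exact le_antisymm (main i j hmid hmidj) (main j i hmidj hmid)
    · have hij : i = j := by
        simp only [tau, Prod.mk.injEq] at hxy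
        apply Subtype.ext
        have h2 : cl m j.val ≠ 0 := by rw [← hxy.1]; exact hmid
        rw [← cl_ne hmid, hxy.1, cl_ne h2]
      subst hij
      apply red
      apply cnt_congr
      intro w
      rw [hI2]
      · rintro rfl; exact hmid (cl_mid (by omega) (by omega))
      · rintro rfl; exact hmid (cl_mid (by omega) (by omega))
  · exfalso; cases b' <;> simp [tau] at hxy
  · exfalso; cases b <;> simp [tau] at hxy
  · have hbb : b = b' := by cases b <;> cases b' <;> simp [tau] at hxy ⊢
    subst hbb
    apply red
    simp only [tau, Prod.mk.injEq] at hj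
    cases b
    · obtain ⟨i, hi, hw⟩ := hF e'
      have h1 := sAdj_false E e
      simp only [h1, hw]
      rw [cnt_pair _ _ _ (by simp), cnt_pair _ _ _ (by simp)]
      have h2 : cl (m+c) i.val = cl (m+c) e'.val.1.val := by
        rcases hi with rfl | ⟨rfl, rfl⟩
        · rfl
        · rw [he0, cm1, c1]
      simp only [tau, h2, hj.1, hj.2.1]
    · obtain ⟨i, hi, hw⟩ := hT e'
      have h1 := sAdj_true E e
      simp only [h1, hw]
      rw [cnt_pair _ _ _ (by simp), cnt_pair _ _ _ (by simp)]
      have h2 : cl (m+c) i.val = cl (m+c) e'.val.2.val := by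
        rcases hi with rfl | ⟨rfl, rfl⟩
        · rfl
        · rw [he0, cm1, c1]
      simp only [tau, h2, hj.1, hj.2.1]
      congr!

set_option maxHeartbeats 1000000 in
theorem facts (n : ℕ)
    (E : IntNode n → IntNode n → Prop)
    (hE : ∀ i j : IntNode n, E i j ↔ i.val > j.val)
    (v1 vm1 : IntNode n) (hv1 : v1.val = 1) (hvm1 : vm1.val = -1)
    (e0 : {p : IntNode n × IntNode n // E p.1 p.2}) (he0 : e0.val = (v1, vm1))
    (A' : SV E → SV E → Prop)
    (hA' : ∀ a b : SV E, A' a b ↔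
      ((sAdj E a b ∧
          ¬ ((a = Sum.inl v1 ∧ b = Sum.inr (e0, false)) ∨
             (b = Sum.inl v1 ∧ a = Sum.inr (e0, false)) ∨
             (a = Sum.inr (e0, true) ∧ b = Sum.inl vm1) ∨
             (b = Sum.inr (e0, true) ∧ a = Sum.inl vm1))) ∨
        ((a = Sum.inl vm1 ∧ b = Sum.inr (e0, false)) ∨
         (b = Sum.inl vm1 ∧ a = Sum.inr (e0, false)) ∨
         (a = Sum.inr (e0, true) ∧ b = Sum.inl v1) ∨
         (b = Sum.inr (e0, true) ∧ a = Sum.inl v1)))) :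
    (∀ a b, A' a b ↔ A' b a) ∧ (∀ v, ¬ A' v v) ∧
    (∀ j w, (∀ b, w ≠ Sum.inr (e0, b)) → (A' (Sum.inl j) w ↔ sAdj E (Sum.inl j) w)) ∧
    (∀ j w, j ≠ v1 → j ≠ vm1 → (A' (Sum.inl j) w ↔ sAdj E (Sum.inl j) w)) ∧
    (∀ e, ∃ i : IntNode n, (i = e.val.1 ∨ (e = e0 ∧ i = vm1)) ∧
      ∀ w, A' (Sum.inr (e, false)) w ↔ w = Sum.inl i ∨ w = Sum.inr (e, true)) ∧
    (∀ e, ∃ i : IntNode n, (i = e.val.2 ∨ (e = e0 ∧ i = v1)) ∧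
      ∀ w, A' (Sum.inr (e, true)) w ↔ w = Sum.inl i ∨ w = Sum.inr (e, false)) ∧
    ¬ IsGadLin A' (sLab E) := by
  classical
  have hne : v1 ≠ vm1 := by rintro rfl; omega
  have hsymm : ∀ a b, A' a b ↔ A' b a := by
    intro a b
    rw [hA', hA', sAdj_symm E a b]
    tauto
  have hirr : ∀ v, ¬ A' v v := by
    intro v hv
    rw [hA'] at hv
    rcases hv with ⟨h, _⟩ | h
    · exact sAdj_irrefl E v h
    · rcases h with ⟨h1, h2⟩ | ⟨h1, h2⟩ | ⟨h1, h2⟩ | ⟨h1, h2⟩ <;> rw [h1] at h2 <;> cases h2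
  have hI : ∀ j w, (∀ b, w ≠ Sum.inr (e0, b)) →
      (A' (Sum.inl j) w ↔ sAdj E (Sum.inl j) w) := by
    intro j w hw
    rw [hA']
    have h1 := hw true
    have h2 := hw false
    simp [h1, h2]
  have hI2 : ∀ j w, j ≠ v1 → j ≠ vm1 → (A' (Sum.inl j) w ↔ sAdj E (Sum.inl j) w) := by
    intro j w h1 h2
    rw [hA']
    have h3 : (Sum.inl j : SV E) ≠ Sum.inl v1 := fun h => h1 (Sum.inl.inj h)
    have h4 : (Sum.inl j : SV E) ≠ Sum.inl vm1 := fun h => h2 (Sum.inl.inj h)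
    simp [h3, h4]
  have hF : ∀ e, ∃ i : IntNode n, (i = e.val.1 ∨ (e = e0 ∧ i = vm1)) ∧
      ∀ w, A' (Sum.inr (e, false)) w ↔ w = Sum.inl i ∨ w = Sum.inr (e, true) := by
    intro e
    by_cases he : e = e0
    · subst he
      refine ⟨vm1, Or.inr ⟨rfl, rfl⟩, ?_⟩
      rintro (k | ⟨f, b⟩)
      · rw [hA']
        simp [sAdj_lr, sAdj_rl, sAdj_rr, sAdj_ll, he0]
        grind
      · rw [hA']
        simp [sAdj_lr, sAdj_rl, sAdj_rr, sAdj_ll]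
        grind
    · refine ⟨e.val.1, Or.inl rfl, ?_⟩
      rintro (k | ⟨f, b⟩)
      · rw [hA']
        simp [sAdj_rl, he]
        grind
      · rw [hA']
        simp [sAdj_rl, sAdj_rr]
        grind
  have hT : ∀ e, ∃ i : IntNode n, (i = e.val.2 ∨ (e = e0 ∧ i = v1)) ∧
      ∀ w, A' (Sum.inr (e, true)) w ↔ w = Sum.inl i ∨ w = Sum.inr (e, false) := by
    intro e
    by_cases he : e = e0
    · subst he
      refine ⟨v1, Or.inr ⟨rfl, rfl⟩, ?_⟩
      rintro (k | ⟨f, b⟩)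
      · rw [hA']
        simp [sAdj_lr, sAdj_rl, sAdj_rr, sAdj_ll, he0]
        grind
      · rw [hA']
        simp [sAdj_lr, sAdj_rl, sAdj_rr, sAdj_ll]
        grind
    · refine ⟨e.val.2, Or.inl rfl, ?_⟩
      rintro (k | ⟨f, b⟩)
      · rw [hA']
        simp [sAdj_rl, he]
        grind
      · rw [hA']
        simp [sAdj_rl, sAdj_rr]
        grind
  refine ⟨hsymm, hirr, hI, hI2, hF, hT, ?_⟩
  · rintro ⟨U, _, R, ⟨hR1, hR2, _⟩, f, hf1, hf2⟩
    let v0 : IntNode n := ⟨0, Finset.mem_Icc.2 ⟨by omega, by omega⟩⟩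
    have hv0 : v0.val = 0 := rfl
    have gen : ∀ i j : IntNode n, i.val > j.val → (i ≠ v1 ∨ j ≠ vm1) →
        GadEdge A' (sLab E) (Sum.inl i) (Sum.inl j) := by
      intro i j hij hne'
      have hne0 : (⟨(i, j), (hE _ _).2 hij⟩ : {p : IntNode n × IntNode n // E p.1 p.2}) ≠ e0 := by
        intro h
        have := congrArg Subtype.val h
        rw [he0] at this
        simp only [Prod.mk.injEq] at this
        tauto
      have hne1 : ∀ b b', (Sum.inr (⟨(i, j), (hE _ _).2 hij⟩, b) : SV E) ≠ Sum.inr (e0, b') := by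
        intro b b' h
        exact hne0 (Prod.mk.inj (Sum.inr.inj h)).1
      refine ⟨Sum.inr (⟨(i, j), (hE _ _).2 hij⟩, false), Sum.inr (⟨(i, j), (hE _ _).2 hij⟩, true),
        by simp [sLab_l, sLab_f, sLab_t], by simp [sLab_l, sLab_f, sLab_t], by simp [sLab_l, sLab_f, sLab_t], by simp [sLab_l, sLab_f, sLab_t], ?_, ?_, ?_⟩
      · rw [hI _ _ (hne1 _)]; simp [sAdj_lr, sAdj_rl, sAdj_rr, sAdj_ll]
      · rw [hA']; left; simp [sAdj_lr, sAdj_rl, sAdj_rr, sAdj_ll]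
      · rw [hsymm, hI _ _ (hne1 _)]; simp [sAdj_lr, sAdj_rl, sAdj_rr, sAdj_ll]
    have g1 := gen v1 v0 (by omega) (Or.inr (by intro h; rw [← h] at hvm1; omega))
    have g2 := gen v0 vm1 (by omega) (Or.inl (by intro h; rw [← h] at hv1; omega))
    have g3 : GadEdge A' (sLab E) (Sum.inl vm1) (Sum.inl v1) := by
      refine ⟨Sum.inr (e0, false), Sum.inr (e0, true),
        by simp [sLab_l, sLab_f, sLab_t], by simp [sLab_l, sLab_f, sLab_t], by simp [sLab_l, sLab_f, sLab_t], by simp [sLab_l, sLab_f, sLab_t], ?_, ?_, ?_⟩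
      · rw [hA']; right; simp
      · rw [hA']; left; simp [sAdj_lr, sAdj_rl, sAdj_rr, sAdj_ll]
      · rw [hA']; right; simp
    obtain ⟨a, b, ha, hb, hab⟩ := gadEdge_R _ _ _ (gadEdge_iso f hf1 hf2 g1)
    obtain ⟨b', d, hb', hd, hbd⟩ := gadEdge_R _ _ _ (gadEdge_iso f hf1 hf2 g2)
    obtain ⟨d', a', hd', ha', hda⟩ := gadEdge_R _ _ _ (gadEdge_iso f hf1 hf2 g3)
    have e1 : b = b' := Sum.inl.inj (hb.symm.trans hb')
    have e2 : d = d' := Sum.inl.inj (hd.symm.trans hd')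
    have e3 : a = a' := Sum.inl.inj (ha.symm.trans ha')
    subst e1 e2 e3
    exact hR1 _ (hR2 _ _ _ (hR2 _ _ _ hab hbd) hda)

end Aux

/-- with `n = ℓ·c+1`, let `G` be the directed graph on `v_{-n},…,v_n` with
edges `(v_i,v_j)` for `i > j`, let `H = gad(G)`, and let `H'` be obtained from `H` by
rerouting the gadget of the edge `e = (v_1, v_{-1})`: the edges `{v¹_{v_1}, v²_e}` and
`{v³_e, v¹_{v_{-1}}}` are deleted and `{v¹_{v_{-1}}, v²_e}` and `{v³_e, v¹_{v_1}}` are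
added.  Then `H` is isomorphic to the gadgetisation of a strict linear order, `H'` is not,
and every node receives the same `c`-bounded WL colour after `ℓ` rounds in `H` and `H'`. -/
theorem stmt15 (ℓ c n : ℕ) (hn : n = ℓ * c + 1)
    (E : IntNode n → IntNode n → Prop)
    (hE : ∀ i j : IntNode n, E i j ↔ i.val > j.val)
    (v1 vm1 : IntNode n) (hv1 : v1.val = 1) (hvm1 : vm1.val = -1)
    (e0 : {p : IntNode n × IntNode n // E p.1 p.2}) (he0 : e0.val = (v1, vm1))
    (A' : GadV E → GadV E → Prop)
    (hA' : ∀ a b : GadV E, A' a b ↔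
      ((gadAdj E a b ∧
          ¬ ((a = Sum.inl v1 ∧ b = Sum.inr (e0, false)) ∨
             (b = Sum.inl v1 ∧ a = Sum.inr (e0, false)) ∨
             (a = Sum.inr (e0, true) ∧ b = Sum.inl vm1) ∨
             (b = Sum.inr (e0, true) ∧ a = Sum.inl vm1))) ∨
        ((a = Sum.inl vm1 ∧ b = Sum.inr (e0, false)) ∨
         (b = Sum.inl vm1 ∧ a = Sum.inr (e0, false)) ∨
         (a = Sum.inr (e0, true) ∧ b = Sum.inl v1) ∨
         (b = Sum.inr (e0, true) ∧ a = Sum.inl v1)))) :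
    IsGadLin (gadAdj E) (gadLab E) ∧ ¬ IsGadLin A' (gadLab E) ∧
      ∀ u : GadV E, WL (gadAdj E) (gadLab E) c ℓ u = WL A' (gadLab E) c ℓ u := by
  obtain ⟨hsymm, hirr, hI, hI2, hF, hT, hN⟩ := facts n E hE v1 vm1 hv1 hvm1 e0 he0 A' hA'
  refine ⟨?_, ?_, ?_⟩
  · refine ⟨IntNode n, inferInstance, E, ⟨?_, ?_, ?_⟩, Equiv.refl _, fun _ _ => Iff.rfl,
      fun _ => rfl⟩
    · intro v; rw [hE]; omega
    · intro u v w; rw [hE, hE, hE]; omega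
    · intro u v huv
      rw [hE, hE]
      have : u.val ≠ v.val := fun h => huv (Subtype.ext h)
      omega
  · exact hN
  · have main : ∀ k m : ℕ, 1 ≤ m → m + k * c = n → ∀ x y : GadV E, tau E m x = tau E m y →
        WL (gadAdj E) (gadLab E) c k x = WL A' (gadLab E) c k y := by
      intro k
      induction k with
      | zero =>
        intro m _ _ x y hxy
        change gadLab E x = gadLab E y
        rcases x with i | ⟨e, _ | _⟩ <;> rcases y with j | ⟨e', _ | _⟩ <;>
          simp [tau, gadLab] at hxy ⊢
      | succ k ih =>
        intro m hm hmk x y hxy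
        have h1 : (m + c) + k * c = n := by rw [← hmk]; ring
        have h2 : m + c ≤ n := by rw [← h1]; exact Nat.le_add_right _ _
        have K := key_step (inst := GadV.fintype E) c n E hE v1 vm1 hv1 hvm1 e0 he0 A' hirr hI hI2 hF hT m hm h2 x y hxy
        exact WL_step (gadAdj E) A' (gadAdj_symm E) hsymm (gadLab E) c k (tau E (m+c))
          (ih (m+c) (by omega) h1) x y (tau_mono E (Nat.le_add_right m c) hxy)
          (fun t => (K t).1) (fun t => (K t).2)
    intro u
    exact main ℓ 1 le_rfl (by rw [hn]; ring) u u rfl
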